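/- Let m ≥ 2 and 0 ≤ a ≤ m−2 be integers, and let M, N be coprime integers with N > 0. Then lim_{t→0⁺} m·e^{(2πiM/N − t)(m−a−1)²/(4m)}·S_m^{(a)}(e^{2πiM/N − t}) = m·Σ_{n=0}^{mN} χ_{2m}^{(a)}(n)·(1 − n/(mN))·e^{2πiMn²/(4mN)}. -/

import Mathlib

open Finset

/-- The q-Pochhammer symbol `(x;q)_n = ∏_{j=0}^{n-1} (1 - x q^j)`. -/
noncomputable def qPoch (x q : ℂ) (n : ℕ) : ℂ := ∏ j ∈ Finset.range n, (1 - x * q ^ j)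

/-- The Gaussian binomial coefficient `[n choose k]_q`. -/
noncomputable def qBinom (q : ℂ) (n k : ℕ) : ℂ :=
  if k ≤ n then qPoch q q n / (qPoch q q (n - k) * qPoch q q k) else 0

/-- Extend a tuple `g : Fin k → ℕ` to `ℕ → ℕ` by zero. -/
def pad (k : ℕ) (g : Fin k → ℕ) : ℕ → ℕ := fun j => if h : j < k then g ⟨j, h⟩ else 0

/-- The general term of Hikami's multi-sum: here `n j` denotes `n_{j+1}` (0-based indexing). -/
noncomputable def Sterm (m a : ℕ) (q : ℂ) (n : ℕ → ℕ) : ℂ :=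
  (-1) ^ (n (m - 2)) *
    q ^ (n (m - 2) * (n (m - 2) + 1) / 2 + (∑ j ∈ Finset.range (m - 2), (n j) ^ 2) +
        ∑ j ∈ Finset.Ico a (m - 2), n j) *
    ∏ i ∈ Finset.range (m - 2), qBinom q (n (i + 1) + if i + 1 = a then 1 else 0) (n i)

/-- The multi-sum `S_m^{(a)}(q)`. -/
noncomputable def S (m a : ℕ) (q : ℂ) : ℂ := ∑' n : Fin (m - 1) → ℕ, Sterm m a q (pad (m - 1) n)

/-- The odd periodic function `χ_{2m}^{(a)}`. -/
def chiS (m a : ℕ) (n : ℤ) : ℤ :=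
  if n % (2 * m) = ((m : ℤ) - a - 1) % (2 * m) then 1
  else if n % (2 * m) = ((m : ℤ) + a + 1) % (2 * m) then -1
  else 0

/-! ### Algebra: Pochhammer symbols and the Bailey chain -/

lemma Q_succ (q : ℂ) (n : ℕ) : qPoch q q (n + 1) = qPoch q q n * (1 - q ^ (n + 1)) := by
  unfold qPoch; rw [Finset.prod_range_succ, pow_succ']

lemma Q_zero (q : ℂ) : qPoch q q 0 = 1 := by simp [qPoch]

lemma one_sub_pow_ne (q : ℂ) (hq : ‖q‖ < 1) (n : ℕ) : 1 - q ^ (n + 1) ≠ 0 := by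
  intro h
  have h1 : q ^ (n + 1) = 1 := (sub_eq_zero.1 h).symm
  have h2 : ‖q‖ ^ (n + 1) = 1 := by rw [← norm_pow, h1, norm_one]
  have h3 : ‖q‖ ^ (n + 1) < 1 := pow_lt_one₀ (norm_nonneg _) hq (Nat.succ_ne_zero _)
  linarith

lemma Q_ne (q : ℂ) (hq : ‖q‖ < 1) (n : ℕ) : qPoch q q n ≠ 0 := by
  induction n with
  | zero => simp [Q_zero]
  | succ n ih => rw [Q_succ]; exact mul_ne_zero ih (one_sub_pow_ne q hq n)

/-- `1/(q)_{n-k}`, zero if `k > n`. -/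
noncomputable def JQ (q : ℂ) (n k : ℕ) : ℂ := if k ≤ n then (qPoch q q (n - k))⁻¹ else 0

lemma JQ_add (q : ℂ) (k i : ℕ) : JQ q (k + i) k = (qPoch q q i)⁻¹ := by
  simp [JQ]

lemma JQ_lt (q : ℂ) {n k : ℕ} (h : n < k) : JQ q n k = 0 := by
  simp [JQ, Nat.not_le.2 h]

lemma qBinom_eq (q : ℂ) (n k : ℕ) :
    qBinom q n k = qPoch q q n * JQ q n k * (qPoch q q k)⁻¹ := by
  unfold qBinom JQ
  split_ifs
  · rw [div_eq_mul_inv, mul_inv]; ring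
  · simp

lemma Q_inv (q : ℂ) (hq : ‖q‖ < 1) (n : ℕ) :
    (qPoch q q n)⁻¹ = (1 - q ^ (n + 1)) * (qPoch q q (n + 1))⁻¹ := by
  rw [Q_succ]
  have := Q_ne q hq n
  have := one_sub_pow_ne q hq n
  field_simp

lemma JQ_succ (q : ℂ) (hq : ‖q‖ < 1) (n k : ℕ) (h : k ≤ n + 1) :
    JQ q n k = (1 - q ^ (n + 1 - k)) * JQ q (n + 1) k := by
  rcases Nat.lt_or_ge n k with h1 | h1
  · have : k = n + 1 := by omega
    subst this
    simp [JQ]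
  · obtain ⟨i, rfl⟩ := Nat.exists_eq_add_of_le h1
    rw [JQ_add, add_assoc, JQ_add, Nat.add_sub_cancel_left, Q_inv q hq]

/-- Pascal. -/
lemma qBinom_pascal (q : ℂ) (hq : ‖q‖ < 1) (n k : ℕ) (hk : k ≤ n) :
    qBinom q (n + 1) (k + 1) = qBinom q n (k + 1) + q ^ (n - k) * qBinom q n k := by
  simp only [qBinom_eq]
  obtain ⟨i, rfl⟩ := Nat.exists_eq_add_of_le hk
  have e1 : JQ q (k + i + 1) (k + 1) = (qPoch q q i)⁻¹ := by
    rw [show k + i + 1 = (k + 1) + i by ring, JQ_add]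
  have e2 : JQ q (k + i) (k + 1) = (1 - q ^ i) * (qPoch q q i)⁻¹ := by
    rw [JQ_succ q hq _ _ (by omega), e1]
    congr 3; omega
  rw [e1, e2, JQ_add, Nat.add_sub_cancel_left, Q_inv q hq k, Q_succ q (k + i)]
  rw [show k + i + 1 = i + (k + 1) by ring, pow_add]
  ring

lemma qBinom_zero (q : ℂ) (hq : ‖q‖ < 1) (n : ℕ) : qBinom q n 0 = 1 := by
  have := Q_ne q hq n
  simp [qBinom, Q_zero, this]

lemma qBinom_lt (q : ℂ) {n k : ℕ} (h : n < k) : qBinom q n k = 0 := by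
  simp [qBinom, Nat.not_le.2 h]

/-- q-Vandermonde. -/
lemma vander (q : ℂ) (hq : ‖q‖ < 1) (L : ℕ) : ∀ b : ℕ,
    ∑ i ∈ Finset.range (L + 1), qBinom q L i * q ^ (i * (i + b)) * (qPoch q q (b + i))⁻¹
      = (qPoch q q (L + b))⁻¹ := by
  induction L with
  | zero => intro b; simp [qBinom_zero q hq]
  | succ L ih =>
    intro b
    rw [Finset.sum_range_succ']
    have h1 : ∀ i ∈ Finset.range (L + 1),
        qBinom q (L + 1) (i + 1) * q ^ ((i + 1) * (i + 1 + b)) * (qPoch q q (b + (i + 1)))⁻¹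
        = qBinom q L (i + 1) * q ^ ((i + 1) * (i + 1 + b)) * (qPoch q q (b + (i + 1)))⁻¹
          + q ^ (L + b + 1) *
            (qBinom q L i * q ^ (i * (i + (b + 1))) * (qPoch q q (b + 1 + i))⁻¹) := by
      intro i hi
      have hi' : i ≤ L := by have := Finset.mem_range.1 hi; omega
      rw [qBinom_pascal q hq L i hi']
      have e : q ^ (L - i) * q ^ ((i + 1) * (i + 1 + b))
          = q ^ (L + b + 1) * q ^ (i * (i + (b + 1))) := by
        rw [← pow_add, ← pow_add]
        congr 1
        obtain ⟨d, rfl⟩ := Nat.exists_eq_add_of_le hi'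
        rw [Nat.add_sub_cancel_left]; ring
      rw [show b + (i + 1) = b + 1 + i by ring]
      linear_combination (qBinom q L i * (qPoch q q (b + 1 + i))⁻¹) * e
    rw [Finset.sum_congr rfl h1, Finset.sum_add_distrib, ← Finset.mul_sum, ih (b + 1)]
    have h2 := ih b
    have h3 : ∑ i ∈ Finset.range (L + 1 + 1),
        qBinom q L i * q ^ (i * (i + b)) * (qPoch q q (b + i))⁻¹ = (qPoch q q (L + b))⁻¹ := by
      rw [Finset.sum_range_succ, h2, qBinom_lt q (Nat.lt_succ_self L)]; simp
    rw [Finset.sum_range_succ'] at h3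
    rw [qBinom_zero q hq] at h3 ⊢
    rw [Q_inv q hq (L + b)] at h3
    rw [show L + (b + 1) = L + b + 1 by ring, show L + 1 + b = L + b + 1 by ring]
    linear_combination h3

/-- The Bailey step kernel. -/
lemma bailey_kernel (q : ℂ) (hq : ‖q‖ < 1) (e n r : ℕ) (hr : r ≤ n) :
    ∑ k ∈ Finset.range (n + 1),
      JQ q n k * q ^ (k ^ 2 + e * k) * (JQ q k r * (qPoch q q (k + r + e))⁻¹)
    = q ^ (r ^ 2 + e * r) * (JQ q n r * (qPoch q q (n + r + e))⁻¹) := by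
  obtain ⟨L, rfl⟩ := Nat.exists_eq_add_of_le hr
  rw [add_assoc, Finset.sum_range_add, Finset.sum_eq_zero, zero_add]
  · have hv := vander q hq L (2 * r + e)
    have hL := Q_ne q hq L
    rw [JQ_add]
    rw [show r + L + r + e = L + (2 * r + e) by ring, ← hv, Finset.mul_sum, Finset.mul_sum]
    refine Finset.sum_congr rfl fun i hi => ?_
    have hi' : i ≤ L := by have := Finset.mem_range.1 hi; omega
    obtain ⟨d, rfl⟩ := Nat.exists_eq_add_of_le hi'
    rw [JQ_add, qBinom_eq, JQ_add, ← add_assoc, JQ_add,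
      show r + i + r + e = 2 * r + e + i by ring,
      show (r + i) ^ 2 + e * (r + i) = r ^ 2 + e * r + i * (i + (2 * r + e)) by ring,
      pow_add q (r ^ 2 + e * r)]
    field_simp
  · intro k hk
    rw [JQ_lt q (Finset.mem_range.1 hk)]; simp

/-- Bailey step. -/
lemma bailey_step (q : ℂ) (hq : ‖q‖ < 1) (e : ℕ) (p α : ℕ → ℂ)
    (hp : ∀ k, p k = qPoch q q k * ∑ r ∈ Finset.range (k + 1),
      α r * (JQ q k r * (qPoch q q (k + r + e))⁻¹)) (n : ℕ) :
    ∑ k ∈ Finset.range (n + 1), qBinom q n k * q ^ (k ^ 2 + e * k) * p k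
      = qPoch q q n * ∑ r ∈ Finset.range (n + 1),
        (α r * q ^ (r ^ 2 + e * r)) * (JQ q n r * (qPoch q q (n + r + e))⁻¹) := by
  have h1 : ∀ k ∈ Finset.range (n + 1), qBinom q n k * q ^ (k ^ 2 + e * k) * p k
      = ∑ r ∈ Finset.range (n + 1), qPoch q q n * (α r * (JQ q n k * q ^ (k ^ 2 + e * k) *
        (JQ q k r * (qPoch q q (k + r + e))⁻¹))) := by
    intro k hk
    have hk' : k ≤ n := by have := Finset.mem_range.1 hk; omega
    have h2 : ∑ r ∈ Finset.range (k + 1), α r * (JQ q k r * (qPoch q q (k + r + e))⁻¹)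
        = ∑ r ∈ Finset.range (n + 1), α r * (JQ q k r * (qPoch q q (k + r + e))⁻¹) := by
      apply Finset.sum_subset
      · intro x; simp only [Finset.mem_range]; omega
      · intro x _ hx
        rw [JQ_lt q (by simp only [Finset.mem_range] at hx; omega)]; simp
    rw [hp k, h2, qBinom_eq, Finset.mul_sum, Finset.mul_sum]
    refine Finset.sum_congr rfl fun r _ => ?_
    have := Q_ne q hq k
    field_simp
  rw [Finset.sum_congr rfl h1, Finset.sum_comm, Finset.mul_sum]
  refine Finset.sum_congr rfl fun r hr => ?_
  rw [← Finset.mul_sum, ← Finset.mul_sum,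
    bailey_kernel q hq e n r (by have := Finset.mem_range.1 hr; omega)]
  ring

/-- Triangular numbers. -/
def tri (n : ℕ) : ℕ := n * (n + 1) / 2

lemma two_tri (n : ℕ) : 2 * tri n = n * (n + 1) :=
  Nat.mul_div_cancel' (Nat.even_mul_succ_self n).two_dvd

lemma tri_succ (n : ℕ) : tri (n + 1) = tri n + (n + 1) := by
  have h1 := two_tri n
  have h2 := two_tri (n + 1)
  nlinarith

lemma tri_zero : tri 0 = 0 := rfl

lemma tri_add (r i : ℕ) : tri (r + i) = tri r + r * i + tri i := by
  have h1 := two_tri r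
  have h2 := two_tri (r + i)
  have h3 := two_tri i
  nlinarith

lemma le_tri (n : ℕ) : n ≤ tri n := by
  have h1 := two_tri n
  rcases n with _ | n
  · simp
  · nlinarith

/-- The unit Bailey pair relative to 1. -/
noncomputable def alf (q : ℂ) : ℕ → ℂ
  | 0 => 1
  | (r + 1) => (-1) ^ (r + 1) * q ^ tri r * (1 + q ^ (r + 1))

lemma unit_pair_partial (q : ℂ) (hq : ‖q‖ < 1) (n s : ℕ) (hs : s ≤ n + 1) :
    ∑ r ∈ Finset.range (s + 1), alf q r * (JQ q (n + 1) r * (qPoch q q (n + 1 + r + 0))⁻¹)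
     = (-1) ^ s * q ^ tri s * (1 - q ^ (n + 1))⁻¹ * JQ q n s * (qPoch q q (n + 1 + s))⁻¹ := by
  have h0 := one_sub_pow_ne q hq n
  induction s with
  | zero =>
    rw [JQ_succ q hq n 0 (by omega)]
    simp [alf, tri_zero]
    field_simp
    simp
  | succ s ih =>
    rw [Finset.sum_range_succ, ih (by omega), JQ_succ q hq n (s + 1) hs]
    obtain ⟨d, hd⟩ := Nat.exists_eq_add_of_le hs
    have hns : n = s + d := by omega
    have e1 : JQ q n s = JQ q (n + 1) (s + 1) := by
      rw [hd, JQ_add, hns, JQ_add]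
    rw [e1, hd, JQ_add, Nat.add_sub_cancel_left]
    simp only [alf, tri_succ]
    rw [← hd]
    rw [Q_inv q hq (n + 1 + s), add_zero, show n + 1 + (s + 1) = n + 1 + s + 1 by ring]
    have e2 : q ^ (n + 1) = q ^ d * q ^ (s + 1) := by rw [← pow_add]; congr 1; omega
    have e3 : q ^ (n + 1 + s + 1) = q ^ (n + 1) * q ^ (s + 1) := by rw [← pow_add]; congr 1
    rw [e3, pow_add q (tri s), pow_succ (-1 : ℂ)]
    generalize q ^ (n + 1) = x at *
    subst e2
    field_simp
    ring

lemma unit_pair (q : ℂ) (hq : ‖q‖ < 1) (n : ℕ) :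
    (if n = 0 then 1 else 0) = qPoch q q n * ∑ r ∈ Finset.range (n + 1),
      alf q r * (JQ q n r * (qPoch q q (n + r + 0))⁻¹) := by
  rcases n with _ | n
  · simp [alf, JQ, Q_zero]
  · rw [unit_pair_partial q hq n (n + 1) le_rfl, JQ_lt q (Nat.lt_succ_self n)]
    simp

/-- The chain relative to 1. -/
noncomputable def Rch (q : ℂ) : ℕ → ℕ → ℂ
  | 0, _ => 1
  | (j + 1), n => ∑ k ∈ Finset.range (n + 1), qBinom q n k * q ^ (k ^ 2 + 0 * k) * Rch q j k

lemma Rch_eq (q : ℂ) (hq : ‖q‖ < 1) (j : ℕ) : ∀ n,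
    Rch q j n = qPoch q q n * ∑ r ∈ Finset.range (n + 1),
      (alf q r * q ^ ((j + 1) * r ^ 2)) * (JQ q n r * (qPoch q q (n + r + 0))⁻¹) := by
  induction j with
  | zero =>
    intro n
    have h := bailey_step q hq 0 _ _ (unit_pair q hq) n
    simp only [zero_add, one_mul]
    simp only [zero_mul, add_zero] at h ⊢
    rw [← h, Finset.sum_range_succ']
    simp [Rch, qBinom_zero q hq]
  | succ j ih =>
    intro n
    have h := bailey_step q hq 0 _ _ ih n
    rw [Rch, h]
    congr 1
    refine Finset.sum_congr rfl fun r _ => ?_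
    rw [mul_assoc (alf q r), ← pow_add]
    congr 3; ring

/-- The Bailey pair relative to q. -/
noncomputable def Bet (q : ℂ) (a r : ℕ) : ℂ :=
  (-1) ^ r * q ^ ((a + 1) * r ^ 2 + tri r) * (1 - q ^ ((a + 1) * (2 * r + 1)))

lemma transition (q : ℂ) (hq : ‖q‖ < 1) (a n : ℕ) :
    Rch q a (n + 1) = qPoch q q n * ∑ r ∈ Finset.range (n + 1),
      Bet q a r * (JQ q n r * (qPoch q q (n + r + 1))⁻¹) := by
  rw [Rch_eq q hq, Q_succ, mul_assoc, Finset.mul_sum, Finset.sum_range_succ']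
  congr 1
  -- X r
  set X : ℕ → ℂ := fun r => (-1) ^ r * q ^ ((a + 1) * r ^ 2 + tri r) *
    (JQ q n r * (qPoch q q (n + r + 1))⁻¹) with hX
  have hlast : X (n + 1) = 0 := by simp [hX, JQ]
  have h0 : (1 - q ^ (n + 1)) * (alf q 0 * q ^ ((a + 1) * 0 ^ 2) *
      (JQ q (n + 1) 0 * (qPoch q q (n + 1 + 0 + 0))⁻¹)) = X 0 := by
    simp only [hX]
    rw [JQ_succ q hq n 0 (by omega)]
    simp [alf, tri_zero]
    ring
  have h1 : ∀ r ∈ Finset.range (n + 1), (1 - q ^ (n + 1)) * (alf q (r + 1) *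
      q ^ ((a + 1) * (r + 1) ^ 2) *
      (JQ q (n + 1) (r + 1) * (qPoch q q (n + 1 + (r + 1) + 0))⁻¹))
      = X (r + 1) + (-1) ^ (r + 1) * q ^ ((a + 1) * (r + 1) ^ 2 + tri r) *
        (JQ q n r * (qPoch q q (n + r + 1))⁻¹) := by
    intro r hr
    have hr' : r ≤ n := by have := Finset.mem_range.1 hr; omega
    obtain ⟨d, rfl⟩ := Nat.exists_eq_add_of_le hr'
    simp only [hX]
    rw [JQ_succ q hq (r + d) (r + 1) (by omega)]
    rw [show r + d + 1 - (r + 1) = d by omega]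
    rw [show r + d + 1 = (r + 1) + d by ring, JQ_add, JQ_add]
    rw [Q_inv q hq (r + d + r + 1), show r + d + r + 1 + 1 = r + 1 + d + (r + 1) + 0 by ring,
      show r + d + (r + 1) + 1 = r + 1 + d + (r + 1) + 0 by ring]
    simp only [alf, tri_succ]
    simp only [pow_add, add_zero]
    ring
  rw [Finset.sum_congr rfl h1, h0, Finset.sum_add_distrib]
  have h2 : ∑ r ∈ Finset.range (n + 1), X (r + 1) + X 0 = ∑ r ∈ Finset.range (n + 1), X r := by
    rw [← Finset.sum_range_succ', Finset.sum_range_succ, hlast, add_zero]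
  rw [add_right_comm, h2, ← Finset.sum_add_distrib]
  refine Finset.sum_congr rfl fun r _ => ?_
  simp only [hX, Bet]
  rw [show (a + 1) * (r + 1) ^ 2 + tri r = (a + 1) * r ^ 2 + tri r + (a + 1) * (2 * r + 1) by ring,
    pow_add q ((a + 1) * r ^ 2 + tri r), pow_succ (-1 : ℂ)]
  ring

/-- Inner finite sums of the multi-sum. -/
noncomputable def Pin (q : ℂ) (a : ℕ) : ℕ → ℕ → ℂ
  | 0, _ => 1
  | (j + 1), n => ∑ k ∈ Finset.range (n + 2), qBinom q (n + if j + 1 = a then 1 else 0) k *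
      q ^ (k ^ 2 + if a ≤ j then k else 0) * Pin q a j k

lemma Pin_lt (q : ℂ) (a : ℕ) (j : ℕ) : j < a → ∀ n, Pin q a j n = Rch q j n := by
  induction j with
  | zero => intro _ n; rfl
  | succ j ih =>
    intro h n
    rw [Pin, Rch, Finset.sum_range_succ]
    rw [if_neg (by omega), qBinom_lt q (by omega)]
    simp only [zero_mul, add_zero]
    refine Finset.sum_congr rfl fun k _ => ?_
    rw [if_neg (by omega), ih (by omega)]
    simp

lemma Pin_a (q : ℂ) (a n : ℕ) : Pin q a a n = Rch q a (n + 1) := by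
  rcases a with _ | a
  · rfl
  · rw [Pin, Rch]
    refine Finset.sum_congr rfl fun k _ => ?_
    rw [if_pos rfl, if_neg (by omega), Pin_lt q _ _ (Nat.lt_succ_self a)]
    simp

lemma Pin_ge (q : ℂ) (hq : ‖q‖ < 1) (a d : ℕ) : ∀ n,
    Pin q a (a + d) n = qPoch q q n * ∑ r ∈ Finset.range (n + 1),
      (Bet q a r * q ^ (d * (r ^ 2 + 1 * r))) * (JQ q n r * (qPoch q q (n + r + 1))⁻¹) := by
  induction d with
  | zero =>
    intro n
    rw [add_zero, Pin_a, transition q hq]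
    simp
  | succ d ih =>
    intro n
    have h := bailey_step q hq 1 _ _ ih n
    rw [← add_assoc, Pin, Finset.sum_range_succ]
    rw [if_neg (by omega), add_zero, qBinom_lt q (by omega : n < n + 1)]
    simp only [zero_mul, add_zero, show a ≤ a + d by omega, if_true]
    simp only [one_mul] at h ⊢
    rw [h]
    congr 1
    refine Finset.sum_congr rfl fun r _ => ?_
    rw [mul_assoc (Bet q a r), ← pow_add]
    congr 3; ring

/-! ### Bounds -/

lemma hs_congr {ι : Type*} {f g : ι → ℂ} {s : ℂ} (hg : HasSum g s) (h : ∀ x, f x = g x) :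
    HasSum f s := by
  rw [show f = g from funext h]; exact hg

lemma geom_partial (ρ : ℝ) (h0 : 0 ≤ ρ) (h1 : ρ < 1) (n : ℕ) :
    ∑ j ∈ Finset.range n, ρ ^ (j + 1) ≤ (1 - ρ)⁻¹ := by
  have hs := summable_geometric_of_lt_one h0 h1
  have h2 : ∑ j ∈ Finset.range n, ρ ^ j ≤ (1 - ρ)⁻¹ := by
    rw [← tsum_geometric_of_lt_one h0 h1]
    exact hs.sum_le_tsum _ (fun i _ => pow_nonneg h0 i)
  refine le_trans (Finset.sum_le_sum fun j _ => ?_) h2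
  exact pow_le_pow_of_le_one h0 h1.le (Nat.le_succ j)

lemma Q_bounds (q : ℂ) (hq : ‖q‖ < 1) :
    ∃ C : ℝ, 1 ≤ C ∧ ∀ n, ‖qPoch q q n‖ ≤ C ∧ ‖(qPoch q q n)⁻¹‖ ≤ C := by
  set ρ := ‖q‖ with hρ
  have h0 : 0 ≤ ρ := norm_nonneg q
  have h1 : 0 < 1 - ρ := by linarith
  have hinv : 1 ≤ (1 - ρ)⁻¹ := (one_le_inv₀ h1).2 (by linarith)
  set D := (1 - ρ)⁻¹ with hD
  have key : ∀ n, ‖qPoch q q n‖ ≤ Real.exp (D * ∑ j ∈ Finset.range n, ρ ^ (j + 1)) ∧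
      ‖(qPoch q q n)⁻¹‖ ≤ Real.exp (D * ∑ j ∈ Finset.range n, ρ ^ (j + 1)) := by
    intro n
    induction n with
    | zero => simp [Q_zero]
    | succ n ih =>
      have hp : 0 ≤ ρ ^ (n + 1) := pow_nonneg h0 _
      have hp1 : ρ ^ (n + 1) ≤ ρ := by
        simpa using pow_le_pow_of_le_one h0 hq.le (show 1 ≤ n + 1 by omega)
      have hnq : ‖q ^ (n + 1)‖ = ρ ^ (n + 1) := by rw [norm_pow]
      have hexp := Real.add_one_le_exp (D * ρ ^ (n + 1))
      rw [Finset.sum_range_succ, mul_add, Real.exp_add, Q_succ, mul_inv, norm_mul, norm_mul]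
      have hup : ‖1 - q ^ (n + 1)‖ ≤ Real.exp (D * ρ ^ (n + 1)) := by
        have := norm_sub_le (1 : ℂ) (q ^ (n + 1))
        rw [hnq, norm_one] at this
        nlinarith
      have hlow : ‖(1 - q ^ (n + 1))⁻¹‖ ≤ Real.exp (D * ρ ^ (n + 1)) := by
        have h2 := norm_sub_norm_le (1 : ℂ) (q ^ (n + 1))
        rw [hnq, norm_one] at h2
        rw [norm_inv]
        have h3 : 0 < 1 - ρ ^ (n + 1) := by linarith
        have h4 : ‖1 - q ^ (n + 1)‖⁻¹ ≤ (1 - ρ ^ (n + 1))⁻¹ := inv_anti₀ h3 h2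
        have h5 : (1 - ρ ^ (n + 1))⁻¹ = 1 + (1 - ρ ^ (n + 1))⁻¹ * ρ ^ (n + 1) := by
          field_simp; ring
        have h6 : (1 - ρ ^ (n + 1))⁻¹ ≤ D := inv_anti₀ h1 (by linarith)
        nlinarith
      exact ⟨mul_le_mul ih.1 hup (norm_nonneg _) (Real.exp_nonneg _),
        mul_le_mul ih.2 hlow (norm_nonneg _) (Real.exp_nonneg _)⟩
  have hle : ∀ n, Real.exp (D * ∑ j ∈ Finset.range n, ρ ^ (j + 1)) ≤ Real.exp (D * D) := by
    intro n
    apply Real.exp_le_exp.2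
    exact mul_le_mul_of_nonneg_left (geom_partial ρ h0 hq n) (by linarith)
  refine ⟨Real.exp (D * D), ?_, fun n => ⟨(key n).1.trans (hle n), (key n).2.trans (hle n)⟩⟩
  apply Real.one_le_exp
  nlinarith

lemma JQ_bound (q : ℂ) (C : ℝ) (hC : 1 ≤ C) (h : ∀ n, ‖(qPoch q q n)⁻¹‖ ≤ C) (n k : ℕ) :
    ‖JQ q n k‖ ≤ C := by
  unfold JQ
  split_ifs
  · exact h _
  · simp; linarith

lemma norm_pow_le_pow (q : ℂ) (hq : ‖q‖ < 1) {e n : ℕ} (h : n ≤ e) : ‖q ^ e‖ ≤ ‖q‖ ^ n := by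
  rw [norm_pow]; exact pow_le_pow_of_le_one (norm_nonneg _) hq.le h

/-! ### The limiting conjugate Bailey pair -/

noncomputable def hterm (q : ℂ) (r s i : ℕ) : ℂ :=
  (-1) ^ i * q ^ (tri i + s * i) * qPoch q q (r + i) * (qPoch q q i)⁻¹ *
    (qPoch q q (r + s + 1 + i))⁻¹

lemma hasSum_telescope (g : ℕ → ℂ) (hs : Summable g) :
    HasSum (fun i => g i - g (i + 1)) (g 0) := by
  have h1 := hs.hasSum
  have h2 := ((summable_nat_add_iff 1).2 hs).hasSum
  have h3 := h1.sub h2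
  have h4 := hs.sum_add_tsum_nat_add 1
  simp only [Finset.sum_range_one] at h4
  rw [← h4] at h3
  simpa using h3

lemma hterm_sum (q : ℂ) (hq : ‖q‖ < 1) (r : ℕ) : ∀ s,
    HasSum (hterm q r s) (qPoch q q r * (qPoch q q s)⁻¹) := by
  induction r with
  | zero =>
    intro s
    obtain ⟨C, hC, hb⟩ := Q_bounds q hq
    set g : ℕ → ℂ := fun i => (-1) ^ i * q ^ (tri i + s * i) * (qPoch q q (s + i))⁻¹ with hg
    have hs : Summable g := by
      refine Summable.of_norm_bounded
        ((summable_geometric_of_lt_one (norm_nonneg q) hq).mul_right C) fun i => ?_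
      simp only [hg, norm_mul, norm_pow, norm_neg, norm_one, one_pow, one_mul]
      refine mul_le_mul ?_ (hb _).2 (norm_nonneg _) (by positivity)
      exact pow_le_pow_of_le_one (norm_nonneg _) hq.le (by have := le_tri i; omega)
    have h := hasSum_telescope g hs
    have e : (fun i => g i - g (i + 1)) = hterm q 0 s := by
      funext i
      simp only [hg, hterm]
      have := Q_ne q hq i
      rw [Q_inv q hq (s + i), show s + (i + 1) = s + i + 1 by ring,
        show 0 + s + 1 + i = s + i + 1 by ring, zero_add, tri_succ,
        show tri i + (i + 1) + s * (i + 1) = tri i + s * i + (s + i + 1) by ring,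
        pow_add q (tri i + s * i), pow_succ (-1 : ℂ)]
      field_simp
      ring
    rw [e] at h
    convert h using 1
    simp [hg, tri_zero, Q_zero]
  | succ r ih =>
    intro s
    have h := (ih s).add ((ih (s + 1)).mul_left (q ^ (r + s + 2) - q ^ (r + 1)))
    convert h using 1
    · funext i
      simp only [hterm]
      rw [show r + 1 + i = r + i + 1 by ring, Q_succ, Q_inv q hq (r + s + 1 + i),
        show r + 1 + s + 1 + i = r + s + 1 + i + 1 by ring,
        show r + (s + 1) + 1 + i = r + s + 1 + i + 1 by ring]
      simp only [pow_add, add_mul, one_mul]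
      ring
    · rw [Q_inv q hq s, Q_succ]
      have := one_sub_pow_ne q hq s
      have := Q_ne q hq (s + 1)
      field_simp
      ring

lemma L3 (q : ℂ) (hq : ‖q‖ < 1) (r : ℕ) :
    HasSum (fun n => (-1) ^ n * q ^ tri n * qPoch q q n * (JQ q n r * (qPoch q q (n + r + 1))⁻¹))
      ((-1) ^ r * q ^ tri r) := by
  have h := (hterm_sum q hq r r).mul_left ((-1) ^ r * q ^ tri r)
  rw [mul_inv_cancel₀ (Q_ne q hq r), mul_one] at h
  have hinj : Function.Injective (fun i : ℕ => r + i) := fun x y hxy => by simpa using hxy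
  rw [← hinj.hasSum_iff]
  · refine hs_congr h fun i => ?_
    simp only [Function.comp, hterm]
    rw [JQ_add, tri_add, show r + i + r + 1 = r + r + 1 + i by ring,
      show tri r + r * i + tri i = tri r + (tri i + r * i) by ring, pow_add, pow_add]
    ring
  · intro x hx
    rw [JQ_lt q]
    · simp
    · by_contra hlt
      exact hx ⟨x - r, by simp only; omega⟩

/-- The full one-variable sum. -/
lemma main_sum (q : ℂ) (hq : ‖q‖ < 1) (a d : ℕ) :
    (Summable fun r : ℕ => q ^ ((a + d + 2) * r ^ 2 + (d + 1) * r) *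
      (1 - q ^ ((a + 1) * (2 * r + 1)))) ∧
    HasSum (fun n => (-1) ^ n * q ^ tri n * Pin q a (a + d) n)
      (∑' r : ℕ, q ^ ((a + d + 2) * r ^ 2 + (d + 1) * r) *
      (1 - q ^ ((a + 1) * (2 * r + 1)))) := by
  obtain ⟨C, hC, hb⟩ := Q_bounds q hq
  have hC0 : 0 ≤ C := by linarith
  have hgeo := summable_geometric_of_lt_one (norm_nonneg q) hq
  set b : ℕ → ℂ := fun r => Bet q a r * q ^ (d * (r ^ 2 + 1 * r)) with hbdef
  have hbb : ∀ r, ‖b r‖ ≤ ‖q‖ ^ r * 2 := by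
    intro r
    simp only [hbdef, Bet, norm_mul]
    have h1 : ‖((-1 : ℂ)) ^ r‖ = 1 := by simp
    have h2 : ‖q ^ ((a + 1) * r ^ 2 + tri r)‖ ≤ ‖q‖ ^ r :=
      norm_pow_le_pow q hq (by have := le_tri r; omega)
    have h3 : ‖1 - q ^ ((a + 1) * (2 * r + 1))‖ ≤ 2 := by
      have h4 := norm_sub_le (1 : ℂ) (q ^ ((a + 1) * (2 * r + 1)))
      have h5 := norm_pow_le_pow q hq (Nat.zero_le ((a + 1) * (2 * r + 1)))
      rw [norm_one] at h4
      simp only [pow_zero] at h5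
      linarith
    have h6 := norm_pow_le_pow q hq (Nat.zero_le (d * (r ^ 2 + 1 * r)))
    rw [pow_zero] at h6
    rw [h1, one_mul]
    calc _ ≤ ‖q‖ ^ r * 2 * 1 := by gcongr
      _ = _ := by ring
  set F : ℕ × ℕ → ℂ := fun x => (-1) ^ x.2 * q ^ tri x.2 * qPoch q q x.2 *
    (JQ q x.2 x.1 * (qPoch q q (x.2 + x.1 + 1))⁻¹) * b x.1 with hF
  have hFs : Summable F := by
    refine Summable.of_norm_bounded
      ((hgeo.mul_of_nonneg hgeo (fun _ => by positivity) (fun _ => by positivity)).mul_right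
        (C * (C * C) * 2)) fun x => ?_
    simp only [hF, norm_mul]
    have h1 : ‖((-1 : ℂ)) ^ x.2‖ = 1 := by simp
    have h2 := norm_pow_le_pow q hq (le_tri x.2)
    have h3 := JQ_bound q C hC (fun n => (hb n).2) x.2 x.1
    have h4 := (hb (x.2 + x.1 + 1)).2
    have h5 := (hb x.2).1
    have h6 := hbb x.1
    rw [h1, one_mul]
    calc _ ≤ ‖q‖ ^ x.2 * C * (C * C) * (‖q‖ ^ x.1 * 2) := by gcongr
      _ = _ := by ring
  have hr : ∀ r, HasSum (fun n => F (r, n)) (((-1) ^ r * q ^ tri r) * b r) :=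
    fun r => (L3 q hq r).mul_right (b r)
  have hn : ∀ n, HasSum (fun r => F (r, n)) ((-1) ^ n * q ^ tri n * Pin q a (a + d) n) := by
    intro n
    have : (-1) ^ n * q ^ tri n * Pin q a (a + d) n = ∑ r ∈ Finset.range (n + 1), F (r, n) := by
      rw [Pin_ge q hq, ← mul_assoc, Finset.mul_sum]
      refine Finset.sum_congr rfl fun r _ => ?_
      simp only [hF, hbdef]; ring
    rw [this]
    apply hasSum_sum_of_ne_finset_zero
    intro r hr
    simp only [hF]
    rw [JQ_lt q (by simp only [Finset.mem_range] at hr; omega)]; simp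
  have e : (fun r => ((-1) ^ r * q ^ tri r) * b r) = fun r : ℕ =>
      q ^ ((a + d + 2) * r ^ 2 + (d + 1) * r) * (1 - q ^ ((a + 1) * (2 * r + 1))) := by
    funext r
    simp only [hbdef, Bet]
    have h1 : ((-1 : ℂ)) ^ r * (-1) ^ r = 1 := by rw [← mul_pow]; simp
    have h2 : q ^ ((a + d + 2) * r ^ 2 + (d + 1) * r) =
        q ^ tri r * q ^ ((a + 1) * r ^ 2 + tri r) * q ^ (d * (r ^ 2 + 1 * r)) := by
      rw [← pow_add, ← pow_add]
      congr 1
      have := two_tri r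
      nlinarith
    rw [h2]
    linear_combination (q ^ tri r * q ^ ((a + 1) * r ^ 2 + tri r) * q ^ (d * (r ^ 2 + 1 * r)) *
      (1 - q ^ ((a + 1) * (2 * r + 1)))) * h1
  have h1 := hFs.hasSum.prod_fiberwise hr
  have h2 := ((Equiv.prodComm ℕ ℕ).hasSum_iff.2 hFs.hasSum).prod_fiberwise hn
  rw [e] at h1
  refine ⟨h1.summable, ?_⟩
  rw [h1.tsum_eq]
  exact h2

/-! ### The multi-sum -/

lemma summable_pi (ρ : ℝ) (h0 : 0 ≤ ρ) (h1 : ρ < 1) (k : ℕ) :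
    Summable (fun g : Fin k → ℕ => ∏ i, ρ ^ g i) := by
  induction k with
  | zero => exact Summable.of_finite
  | succ k ih =>
    rw [← (Fin.snocEquiv (fun _ : Fin (k + 1) => ℕ)).summable_iff]
    have h := (summable_geometric_of_lt_one h0 h1).mul_of_nonneg ih
      (fun _ => by positivity) (fun _ => Finset.prod_nonneg fun _ _ => by positivity)
    refine h.congr fun x => ?_
    simp [Fin.snocEquiv, Fin.prod_univ_castSucc, mul_comm]

/-- Inner weight. -/
noncomputable def Wt (q : ℂ) (a j : ℕ) (h : ℕ → ℕ) : ℂ :=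
  q ^ ((∑ i ∈ Finset.range j, (h i) ^ 2) + ∑ i ∈ Finset.Ico a j, h i) *
    ∏ i ∈ Finset.range j, qBinom q (h (i + 1) + if i + 1 = a then 1 else 0) (h i)

/-- Extend a tuple by the constant `n`. -/
def extT (j : ℕ) (g : Fin j → ℕ) (n : ℕ) : ℕ → ℕ := fun i => if h : i < j then g ⟨i, h⟩ else n

lemma Wt_congr (q : ℂ) (a j : ℕ) (h h' : ℕ → ℕ) (hh : ∀ i ≤ j, h i = h' i) :
    Wt q a j h = Wt q a j h' := by
  unfold Wt
  congr 1
  · congr 2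
    · exact Finset.sum_congr rfl fun i hi => by rw [hh i (Finset.mem_range.1 hi).le]
    · exact Finset.sum_congr rfl fun i hi => by rw [hh i (Finset.mem_Ico.1 hi).2.le]
  · exact Finset.prod_congr rfl fun i hi => by
      rw [hh i (Finset.mem_range.1 hi).le, hh (i + 1) (Finset.mem_range.1 hi)]

lemma Wt_succ (q : ℂ) (a j : ℕ) (h : ℕ → ℕ) :
    Wt q a (j + 1) h = qBinom q (h (j + 1) + if j + 1 = a then 1 else 0) (h j) *
      q ^ ((h j) ^ 2 + if a ≤ j then h j else 0) * Wt q a j h := by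
  unfold Wt
  rw [Finset.sum_range_succ, Finset.prod_range_succ]
  have : ∑ i ∈ Finset.Ico a (j + 1), h i =
      ∑ i ∈ Finset.Ico a j, h i + if a ≤ j then h j else 0 := by
    split_ifs with haj
    · rw [Finset.sum_Ico_succ_top haj]
    · rw [Finset.Ico_eq_empty (by omega), Finset.Ico_eq_empty (by omega)]; simp
  rw [this]
  simp only [pow_add]
  ring

lemma qBinom_bound (q : ℂ) (hq : ‖q‖ < 1) : ∃ C : ℝ, 1 ≤ C ∧ ∀ n k, ‖qBinom q n k‖ ≤ C := by
  obtain ⟨C, hC, hb⟩ := Q_bounds q hq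
  have hC0 : 0 ≤ C := by linarith
  refine ⟨C * C * C, ?_, fun n k => ?_⟩
  · nlinarith [mul_le_mul hC hC zero_le_one hC0]
  · rw [qBinom_eq, norm_mul, norm_mul]
    have h3 := JQ_bound q C hC (fun n => (hb n).2) n k
    have := (hb n).1
    have := (hb k).2
    gcongr

lemma Wt_bound (q : ℂ) (hq : ‖q‖ < 1) (a j : ℕ) : ∃ C : ℝ, 0 ≤ C ∧ ∀ h : ℕ → ℕ,
    ‖Wt q a j h‖ ≤ C * ∏ i ∈ Finset.range j, ‖q‖ ^ h i := by
  obtain ⟨C, hC, hb⟩ := qBinom_bound q hq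
  have hC0 : 0 ≤ C := by linarith
  refine ⟨C ^ j, by positivity, fun h => ?_⟩
  induction j with
  | zero => simp [Wt]
  | succ j ih =>
    rw [Wt_succ, norm_mul, norm_mul, Finset.prod_range_succ]
    have h1 := hb (h (j + 1) + if j + 1 = a then 1 else 0) (h j)
    have h2 : ‖q ^ ((h j) ^ 2 + if a ≤ j then h j else 0)‖ ≤ ‖q‖ ^ h j :=
      norm_pow_le_pow q hq (by have := Nat.le_self_pow (two_ne_zero) (h j); omega)
    calc _ ≤ C * ‖q‖ ^ h j * (C ^ j * ∏ i ∈ Finset.range j, ‖q‖ ^ h i) := by gcongr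
      _ = _ := by ring

lemma ext_snoc_lt (j k n i : ℕ) (g : Fin j → ℕ) (hi : i ≤ j) :
    extT (j + 1) (Fin.snoc (α := fun _ => ℕ) g k) n i = extT j g k i := by
  unfold extT
  rw [dif_pos (by omega)]
  rcases Nat.lt_or_ge i j with h | h
  · rw [dif_pos h]; simp [Fin.snoc, h]
  · rw [dif_neg (by omega)]; simp [Fin.snoc, Nat.not_lt.2 h]

lemma Wt_summable (q : ℂ) (hq : ‖q‖ < 1) (a j n : ℕ) :
    Summable (fun g : Fin j → ℕ => Wt q a j (extT j g n)) := by
  obtain ⟨C, hC, hb⟩ := Wt_bound q hq a j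
  refine Summable.of_norm_bounded ((summable_pi ‖q‖ (norm_nonneg _) hq j).mul_left C) fun g => ?_
  refine (hb _).trans (le_of_eq ?_)
  rw [Finset.prod_range]
  simp [extT]

lemma Wt_hasSum (q : ℂ) (hq : ‖q‖ < 1) (a j : ℕ) : ∀ n,
    HasSum (fun g : Fin j → ℕ => Wt q a j (extT j g n)) (Pin q a j n) := by
  induction j with
  | zero =>
    intro n
    convert hasSum_unique (fun g : Fin 0 → ℕ => Wt q a 0 (extT 0 g n)) using 1
    simp [Wt, Pin]
  | succ j ih =>
    intro n
    have hs := Wt_summable q hq a (j + 1) n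
    have h1 := (Fin.snocEquiv (fun _ : Fin (j + 1) => ℕ)).hasSum_iff.2 hs.hasSum
    have h2 : ∀ k, HasSum (fun g : Fin j → ℕ => ((fun g => Wt q a (j + 1) (extT (j + 1) g n)) ∘
        (Fin.snocEquiv (fun _ : Fin (j + 1) => ℕ))) (k, g))
        (qBinom q (n + if j + 1 = a then 1 else 0) k *
          q ^ (k ^ 2 + if a ≤ j then k else 0) * Pin q a j k) := by
      intro k
      refine hs_congr ((ih k).mul_left (qBinom q (n + if j + 1 = a then 1 else 0) k *
          q ^ (k ^ 2 + if a ≤ j then k else 0))) fun g => ?_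
      simp only [Function.comp, Fin.snocEquiv, Equiv.coe_fn_mk]
      rw [Wt_succ, Wt_congr q a j _ (extT j g k) (fun i hi => ext_snoc_lt j k n i g hi),
        ext_snoc_lt j k n j g le_rfl]
      simp [extT]
    have h3 := h1.prod_fiberwise h2
    have h4 : HasSum (fun k => qBinom q (n + if j + 1 = a then 1 else 0) k *
          q ^ (k ^ 2 + if a ≤ j then k else 0) * Pin q a j k) (Pin q a (j + 1) n) := by
      rw [Pin]
      apply hasSum_sum_of_ne_finset_zero
      intro k hk
      rw [qBinom_lt q]
      · simp
      · simp only [Finset.mem_range] at hk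
        split_ifs <;> omega
    rw [← h3.unique h4]
    exact hs.hasSum

lemma S_eq (q : ℂ) (hq : ‖q‖ < 1) (a d : ℕ) :
    S (a + d + 2) a q = ∑' r : ℕ, q ^ ((a + d + 2) * r ^ 2 + (d + 1) * r) *
      (1 - q ^ ((a + 1) * (2 * r + 1))) := by
  have hpt : ∀ (k : ℕ) (g : Fin (a + d) → ℕ),
      Sterm (a + d + 2) a q (pad (a + d + 1) (Fin.snoc (α := fun _ => ℕ) g k))
        = (-1) ^ k * q ^ tri k * Wt q a (a + d) (extT (a + d) g k) := by
    intro k g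
    have hp : pad (a + d + 1) (Fin.snoc (α := fun _ => ℕ) g k)
      = extT (a + d + 1) (Fin.snoc (α := fun _ => ℕ) g k) 0 := rfl
    rw [hp, ← Wt_congr q a (a + d) _ (extT (a + d) g k)
      (fun i hi => ext_snoc_lt (a + d) k 0 i g hi)]
    have hk := ext_snoc_lt (a + d) k 0 (a + d) g le_rfl
    have hk2 : extT (a + d) g k (a + d) = k := by simp [extT]
    rw [hk2] at hk
    unfold Sterm Wt tri
    simp only [Nat.add_sub_cancel]
    rw [hk, add_assoc (k * (k + 1) / 2), pow_add q (k * (k + 1) / 2)]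
    ring
  have hs : Summable (fun n : Fin (a + d + 1) → ℕ =>
      Sterm (a + d + 2) a q (pad (a + d + 1) n)) := by
    obtain ⟨C, hC, hb⟩ := Wt_bound q hq a (a + d)
    rw [← (Fin.snocEquiv (fun _ : Fin (a + d + 1) => ℕ)).summable_iff]
    have h := ((summable_geometric_of_lt_one (norm_nonneg _) hq).mul_of_nonneg
      (summable_pi ‖q‖ (norm_nonneg _) hq (a + d))
      (fun _ => by positivity) (fun _ => Finset.prod_nonneg fun _ _ => by positivity)).mul_left C
    refine Summable.of_norm_bounded h fun x => ?_
    simp only [Function.comp, Fin.snocEquiv, Equiv.coe_fn_mk]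
    rw [hpt, norm_mul, norm_mul]
    have h1 : ‖((-1 : ℂ)) ^ x.1‖ = 1 := by simp
    have h2 := norm_pow_le_pow q hq (le_tri x.1)
    have h3 := hb (extT (a + d) x.2 x.1)
    have h4 : ∏ i ∈ Finset.range (a + d), ‖q‖ ^ extT (a + d) x.2 x.1 i = ∏ i, ‖q‖ ^ x.2 i := by
      rw [Finset.prod_range]; simp [extT]
    rw [h4] at h3
    rw [h1, one_mul]
    calc _ ≤ ‖q‖ ^ x.1 * (C * ∏ i, ‖q‖ ^ x.2 i) := by gcongr
      _ = _ := by ring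
  have h1 := (Fin.snocEquiv (fun _ : Fin (a + d + 1) => ℕ)).hasSum_iff.2 hs.hasSum
  have h2 : ∀ k, HasSum (fun g : Fin (a + d) → ℕ =>
      ((fun n : Fin (a + d + 1) → ℕ => Sterm (a + d + 2) a q (pad (a + d + 1) n)) ∘
        (Fin.snocEquiv (fun _ : Fin (a + d + 1) => ℕ))) (k, g))
      ((-1) ^ k * q ^ tri k * Pin q a (a + d) k) := by
    intro k
    exact hs_congr ((Wt_hasSum q hq a (a + d) k).mul_left ((-1) ^ k * q ^ tri k)) (hpt k)
  exact (h1.prod_fiberwise h2).unique (main_sum q hq a d).2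

/-! ### The Abelian limit -/

lemma gauss_geom (s : ℝ) (hs : 0 < s) (n : ℕ) :
    Real.exp (-(s * (n : ℝ) ^ 2) / 2) ≤ Real.exp (1 / 2) * Real.exp (-Real.sqrt s) ^ n := by
  rw [← Real.exp_nat_mul, ← Real.exp_add]
  apply Real.exp_le_exp.2
  have h := Real.sq_sqrt hs.le
  nlinarith [sq_nonneg (Real.sqrt s * n - 1)]

lemma geo_lt (s : ℝ) (hs : 0 < s) : Real.exp (-Real.sqrt s) < 1 := by
  rw [Real.exp_lt_one_iff]; have := Real.sqrt_pos.2 hs; linarith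

lemma gauss_summable (s : ℝ) (hs : 0 < s) :
    Summable (fun n : ℕ => Real.exp (-(s * (n : ℝ) ^ 2))) := by
  refine Summable.of_nonneg_of_le (fun n => (Real.exp_pos _).le) (fun n => ?_)
    ((summable_geometric_of_lt_one (Real.exp_pos _).le (geo_lt s hs)).mul_left (Real.exp (1 / 2)))
  refine le_trans (Real.exp_le_exp.2 ?_) (gauss_geom s hs n)
  have : 0 ≤ s * (n : ℝ) ^ 2 := by positivity
  linarith

lemma second_diff (s : ℝ) (hs : 0 < s) (hs1 : s ≤ 1) (n : ℕ) :
    |Real.exp (-(s * (n : ℝ) ^ 2)) - 2 * Real.exp (-(s * ((n : ℝ) + 1) ^ 2)) +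
      Real.exp (-(s * ((n : ℝ) + 2) ^ 2))| ≤ 18 * s * Real.exp (-(s * (n : ℝ) ^ 2) / 2) := by
  set u := s * (2 * n + 1) with hu
  set y := s * (n : ℝ) ^ 2 with hy
  have hy0 : 0 ≤ y := by positivity
  have hu0 : 0 ≤ u := by positivity
  have e1 : Real.exp (-(s * ((n : ℝ) + 1) ^ 2)) = Real.exp (-y) * Real.exp (-u) := by
    rw [← Real.exp_add]; congr 1; simp only [hy, hu]; ring
  have e2 : Real.exp (-(s * ((n : ℝ) + 2) ^ 2)) =
      Real.exp (-y) * Real.exp (-u) ^ 2 * Real.exp (-(2 * s)) := by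
    rw [← Real.exp_nat_mul, ← Real.exp_add, ← Real.exp_add]; congr 1
    simp only [hy, hu]; push_cast; ring
  rw [e1, e2]
  set x := Real.exp (-u) with hx
  set w := Real.exp (-y) with hw
  set v := Real.exp (-(2 * s)) with hv
  have hx0 : 0 < x := Real.exp_pos _
  have hx1 : x ≤ 1 := Real.exp_le_one_iff.2 (by linarith)
  have hxu : 1 - u ≤ x := by have := Real.add_one_le_exp (-u); linarith
  have hw0 : 0 < w := Real.exp_pos _
  have hv0 : 0 < v := Real.exp_pos _
  have hv1 : v ≤ 1 := Real.exp_le_one_iff.2 (by linarith)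
  have hvs : 1 - 2 * s ≤ v := by have := Real.add_one_le_exp (-(2 * s)); linarith
  have e3 : w - 2 * (w * x) + w * x ^ 2 * v = w * ((1 - x) ^ 2 - x ^ 2 * (1 - v)) := by ring
  have b1 : (1 - x) ^ 2 ≤ u ^ 2 := by
    apply pow_le_pow_left₀ (by linarith); linarith
  have b2 : x ^ 2 * (1 - v) ≤ 2 * s := by
    have : x ^ 2 ≤ 1 := pow_le_one₀ hx0.le hx1
    nlinarith
  have b2' : 0 ≤ x ^ 2 * (1 - v) := mul_nonneg (by positivity) (by linarith)
  have b3 : |(1 - x) ^ 2 - x ^ 2 * (1 - v)| ≤ u ^ 2 + 2 * s := by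
    rw [abs_le]; constructor <;> nlinarith [sq_nonneg (1 - x), sq_nonneg u]
  have b4 : u ^ 2 ≤ s * (8 * y + 2) := by
    have : u ^ 2 = s * (s * (2 * n + 1) ^ 2) := by simp only [hu]; ring
    rw [this]
    apply mul_le_mul_of_nonneg_left _ hs.le
    simp only [hy]
    nlinarith [sq_nonneg (2 * (n : ℝ) - 1), mul_nonneg hs.le (sq_nonneg (2 * (n : ℝ) - 1))]
  have b5 : w = Real.exp (-y / 2) * Real.exp (-y / 2) := by
    rw [hw, ← Real.exp_add]; congr 1; ring
  set z := Real.exp (-y / 2) with hz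
  have hz0 : 0 < z := Real.exp_pos _
  have b6 : z * (1 + y / 2) ≤ 1 := by
    have h1 := Real.add_one_le_exp (y / 2)
    have h2 : z * Real.exp (y / 2) = 1 := by rw [← Real.exp_add]; simp; ring
    nlinarith
  rw [e3, abs_mul, abs_of_pos hw0]
  calc w * |(1 - x) ^ 2 - x ^ 2 * (1 - v)| ≤ w * (s * (8 * y + 2) + 2 * s) := by gcongr; linarith
    _ = z * s * (z * (8 * y + 4)) := by rw [b5]; ring
    _ ≤ z * s * 18 := by
        apply mul_le_mul_of_nonneg_left _ (by positivity)
        nlinarith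
    _ = _ := by ring

lemma by_parts (X f : ℕ → ℂ) (K : ℝ) (hX : ∀ n, ‖X n‖ ≤ K) (hf : Summable (fun n => ‖f n‖)) :
    ∑' n, (X (n + 1) - X n) * f n = -(X 0 * f 0) + ∑' n, X (n + 1) * (f n - f (n + 1)) := by
  have s1 : Summable (fun n => X n * f n) :=
    Summable.of_norm_bounded (hf.mul_left K) fun n => by
      rw [norm_mul]; gcongr; exact hX n
  have s2 : Summable (fun n => X (n + 1) * f n) :=
    Summable.of_norm_bounded (hf.mul_left K) fun n => by
      rw [norm_mul]; gcongr; exact hX _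
  have s3 := (summable_nat_add_iff 1).2 s1
  have h1 := s1.sum_add_tsum_nat_add 1
  simp only [Finset.sum_range_one] at h1
  simp only [sub_mul, mul_sub]
  rw [s2.tsum_sub s1, s2.tsum_sub s3, ← h1]
  ring

lemma periodic_bdd (X : ℕ → ℂ) (T : ℕ) (hT : 0 < T) (h : ∀ n, X (n + T) = X n) :
    ∃ K : ℝ, 0 ≤ K ∧ ∀ n, ‖X n‖ ≤ K := by
  refine ⟨∑ i ∈ Finset.range T, ‖X i‖, Finset.sum_nonneg fun _ _ => norm_nonneg _, fun n => ?_⟩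
  have hp : Function.Periodic X T := h
  rw [← hp.map_mod_nat n]
  exact Finset.single_le_sum (f := fun i => ‖X i‖) (fun _ _ => norm_nonneg _)
    (Finset.mem_range.2 (Nat.mod_lt _ hT))

lemma partial_periodic (c : ℕ → ℂ) (T : ℕ) (h : ∀ n, c (n + T) = c n)
    (h0 : ∑ k ∈ Finset.range T, c k = 0) (n : ℕ) :
    ∑ k ∈ Finset.range (n + T), c k = ∑ k ∈ Finset.range n, c k := by
  induction n with
  | zero => simp [h0]
  | succ n ih =>
    rw [show n + 1 + T = n + T + 1 by ring, Finset.sum_range_succ, ih, h, Finset.sum_range_succ]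

lemma abel_limit (c : ℕ → ℂ) (T : ℕ) (hT : 0 < T) (hper : ∀ n, c (n + T) = c n)
    (h0 : ∑ k ∈ Finset.range T, c k = 0) (μ : ℂ)
    (hμ : ∑ k ∈ Finset.range T, ∑ i ∈ Finset.range (k + 1), c i = T * μ) :
    Filter.Tendsto (fun s : ℝ => ∑' n : ℕ, c n * (Real.exp (-(s * (n : ℝ) ^ 2)) : ℂ))
      (nhdsWithin 0 (Set.Ioi 0)) (nhds μ) := by
  set D : ℕ → ℂ := fun n => ∑ i ∈ Finset.range n, c i - μ with hD
  have hDper : ∀ n, D (n + T) = D n := fun n => by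
    simp only [hD]; rw [partial_periodic c T hper h0]
  set E : ℕ → ℂ := fun n => ∑ k ∈ Finset.range n, D (k + 1) with hE
  have hEper : ∀ n, E (n + T) = E n := by
    apply partial_periodic
    · intro n; rw [show n + T + 1 = n + 1 + T by ring, hDper]
    · simp only [hD]; rw [Finset.sum_sub_distrib, hμ]; simp
  obtain ⟨K, hK, hDK⟩ := periodic_bdd D T hT hDper
  obtain ⟨K', hK', hEK⟩ := periodic_bdd E T hT hEper
  have hmain : ∀ s : ℝ, 0 < s → s ≤ 1 →
      ‖∑' n : ℕ, c n * (Real.exp (-(s * (n : ℝ) ^ 2)) : ℂ) - μ‖ ≤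
        K' * (36 * Real.exp (1 / 2) * Real.sqrt s) := by
    intro s hs hs1
    set f : ℕ → ℂ := fun n => (Real.exp (-(s * (n : ℝ) ^ 2)) : ℂ) with hf
    have hfs : Summable (fun n => ‖f n‖) := by
      refine (gauss_summable s hs).congr fun n => ?_
      simp only [hf, Complex.norm_real, Real.norm_eq_abs, abs_of_pos (Real.exp_pos _)]
    have hfs' : Summable (fun n => ‖f n - f (n + 1)‖) :=
      Summable.of_nonneg_of_le (fun _ => norm_nonneg _) (fun n => norm_sub_le _ _)
        (hfs.add ((summable_nat_add_iff 1).2 hfs))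
    have e1 : ∑' n : ℕ, c n * (Real.exp (-(s * (n : ℝ) ^ 2)) : ℂ)
        = ∑' n, (D (n + 1) - D n) * f n := by
      congr 1; funext n; simp only [hD]; rw [Finset.sum_range_succ]; ring
    have e2 : ∑' n, D (n + 1) * (f n - f (n + 1))
        = ∑' n, (E (n + 1) - E n) * (f n - f (n + 1)) := by
      congr 1; funext n; simp only [hE]; rw [Finset.sum_range_succ]; ring
    have hf0 : f 0 = 1 := by simp [hf]
    have hD0 : D 0 = -μ := by simp [hD]
    have hE0 : E 0 = 0 := by simp [hE]
    rw [e1, by_parts D f K hDK hfs, e2, by_parts E (fun n => f n - f (n + 1)) K' hEK hfs',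
      hf0, hD0, hE0]
    have hρ0 := (Real.exp_pos (-Real.sqrt s)).le
    have hgs := summable_geometric_of_lt_one hρ0 (geo_lt s hs)
    have hbd : ∀ n, ‖E (n + 1) * (f n - f (n + 1) - (f (n + 1) - f (n + 1 + 1)))‖ ≤
        K' * (18 * s * (Real.exp (1 / 2))) * Real.exp (-Real.sqrt s) ^ n := by
      intro n
      rw [norm_mul]
      have h1 : ‖f n - f (n + 1) - (f (n + 1) - f (n + 1 + 1))‖ ≤
          18 * s * (Real.exp (1 / 2) * Real.exp (-Real.sqrt s) ^ n) := by
        have h2 := second_diff s hs hs1 n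
        have h3 : f n - f (n + 1) - (f (n + 1) - f (n + 1 + 1)) =
          ((Real.exp (-(s * (n : ℝ) ^ 2)) - 2 * Real.exp (-(s * ((n : ℝ) + 1) ^ 2)) +
            Real.exp (-(s * ((n : ℝ) + 2) ^ 2)) : ℝ) : ℂ) := by
          simp only [hf]
          rw [show ((n + 1 + 1 : ℕ) : ℝ) = (n : ℝ) + 2 by push_cast; ring,
            show ((n + 1 : ℕ) : ℝ) = (n : ℝ) + 1 by push_cast; ring]
          push_cast; ring
        rw [h3, Complex.norm_real, Real.norm_eq_abs]
        refine h2.trans ?_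
        have := gauss_geom s hs n
        gcongr
      calc _ ≤ K' * (18 * s * (Real.exp (1 / 2) * Real.exp (-Real.sqrt s) ^ n)) := by
            gcongr; exact hEK _
        _ = _ := by ring
    have hsum := tsum_of_norm_bounded (hgs.mul_left (K' * (18 * s * (Real.exp (1 / 2))))).hasSum hbd
    rw [tsum_mul_left, tsum_geometric_of_lt_one hρ0 (geo_lt s hs)] at hsum
    have e3 : -(-μ * 1) + (-(0 * (f 0 - f (0 + 1))) +
        ∑' n, E (n + 1) * (f n - f (n + 1) - (f (n + 1) - f (n + 1 + 1)))) - μ =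
        ∑' n, E (n + 1) * (f n - f (n + 1) - (f (n + 1) - f (n + 1 + 1))) := by ring
    simp only [hf0] at e3
    rw [e3]
    refine hsum.trans ?_
    set σ := Real.sqrt s with hσ
    have hσ0 : 0 < σ := Real.sqrt_pos.2 hs
    have hσ1 : σ ≤ 1 := Real.sqrt_le_one.2 hs1
    have hσs : s = σ * σ := (Real.mul_self_sqrt hs.le).symm
    have h5 : (1 - Real.exp (-σ))⁻¹ ≤ 2 / σ := by
      have h6 : Real.exp (-σ) * (1 + σ) ≤ 1 := by
        have h7 := Real.add_one_le_exp σ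
        have h8 : Real.exp (-σ) * Real.exp σ = 1 := by rw [← Real.exp_add]; simp
        nlinarith [Real.exp_pos (-σ)]
      have h9 : σ / 2 ≤ 1 - Real.exp (-σ) := by nlinarith [Real.exp_pos (-σ)]
      rw [show 2 / σ = (σ / 2)⁻¹ by rw [inv_div]]
      exact inv_anti₀ (by positivity) h9
    calc _ ≤ K' * (18 * s * Real.exp (1 / 2)) * (2 / σ) := by gcongr
      _ = _ := by rw [hσs]; field_simp; ring
  rw [tendsto_iff_norm_sub_tendsto_zero]
  have hz : Filter.Tendsto (fun s : ℝ => K' * (36 * Real.exp (1 / 2) * Real.sqrt s))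
      (nhdsWithin 0 (Set.Ioi 0)) (nhds 0) := by
    have hc : Continuous (fun s : ℝ => K' * (36 * Real.exp (1 / 2) * Real.sqrt s)) := by fun_prop
    have := (hc.tendsto 0).mono_left (nhdsWithin_le_nhds (s := Set.Ioi 0))
    simpa using this
  refine squeeze_zero' (Filter.Eventually.of_forall fun _ => norm_nonneg _) ?_ hz
  have h1 : ∀ᶠ s : ℝ in nhdsWithin 0 (Set.Ioi 0), s ∈ Set.Ioo (0 : ℝ) 1 :=
    Ioo_mem_nhdsGT one_pos
  filter_upwards [h1] with s hs
  exact hmain s hs.1 hs.2.le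

/-! ### The periodic function -/

lemma odd_sums (c : ℕ → ℂ) (H : ℕ) (hH : 0 < H) (hper : ∀ n, c (n + 2 * H) = c n)
    (hodd : ∀ n, n ≤ 2 * H → c (2 * H - n) = -c n) :
    ∑ k ∈ Finset.range (2 * H), c k = 0 ∧
    ∑ k ∈ Finset.range (2 * H), ∑ i ∈ Finset.range (k + 1), c i =
      ((2 * H : ℕ) : ℂ) * ∑ n ∈ Finset.range (H + 1), c n * (1 - (n : ℂ) / H) := by
  have hHc : (H : ℂ) ≠ 0 := by exact_mod_cast hH.ne'
  have hl : c (2 * H) = 0 := by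
    have h1 := hper 0
    have h2 := hodd 0 (by omega)
    simp only [zero_add, Nat.sub_zero] at h1 h2
    rw [h1] at h2 ⊢
    linear_combination h2 / 2
  constructor
  · have h1 := Finset.sum_range_reflect c (2 * H + 1)
    have h2 : ∀ j ∈ Finset.range (2 * H + 1), c (2 * H + 1 - 1 - j) = -c j := by
      intro j hj
      have := Finset.mem_range.1 hj
      rw [← hodd j (by omega)]; congr 1
    rw [Finset.sum_congr rfl h2, Finset.sum_neg_distrib, Finset.sum_range_succ, hl] at h1
    linear_combination -h1 / 2
  · have hA : ∀ L : ℕ, ∑ k ∈ Finset.range L, ∑ i ∈ Finset.range (k + 1), c i =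
        ∑ i ∈ Finset.range L, ((L : ℂ) - i) * c i := by
      intro L
      induction L with
      | zero => simp
      | succ L ih =>
        rw [Finset.sum_range_succ, ih, Finset.sum_range_succ _ L, Finset.sum_range_succ _ L,
          ← add_assoc, ← Finset.sum_add_distrib]
        congr 1
        · exact Finset.sum_congr rfl fun i _ => by push_cast; ring
        · push_cast; ring
    rw [hA]
    have hB : ∑ i ∈ Finset.range (2 * H), (((2 * H : ℕ) : ℂ) - i) * c i
        = ∑ i ∈ Finset.range (H + 1 + H), (((2 * H : ℕ) : ℂ) - i) * c i := by
      rw [show H + 1 + H = 2 * H + 1 by ring, Finset.sum_range_succ _ (2 * H), hl]; simp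
    rw [hB, Finset.sum_range_add]
    have h1 := Finset.sum_range_reflect
      (fun i => (((2 * H : ℕ) : ℂ) - ((H + 1 + i : ℕ) : ℂ)) * c (H + 1 + i)) H
    have h2 : ∀ j ∈ Finset.range H,
        (fun i => (((2 * H : ℕ) : ℂ) - ((H + 1 + i : ℕ) : ℂ)) * c (H + 1 + i)) (H - 1 - j)
        = -((j : ℂ) * c j) := by
      intro j hj
      have hj' := Finset.mem_range.1 hj
      simp only
      rw [show H + 1 + (H - 1 - j) = 2 * H - j by omega, hodd j (by omega),
        Nat.cast_sub (by omega)]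
      ring
    rw [← h1, Finset.sum_congr rfl h2, Finset.sum_range_succ, Finset.sum_range_succ, add_right_comm,
      ← Finset.sum_add_distrib, mul_add, Finset.mul_sum]
    have hc : c H = 0 := by
      have := hodd H (by omega)
      rw [show 2 * H - H = H by omega] at this
      linear_combination this / 2
    rw [hc]
    simp only [mul_zero, zero_mul, add_zero]
    refine Finset.sum_congr rfl fun i _ => ?_
    push_cast
    field_simp
    ring

lemma chi_dvd (m a : ℕ) (n : ℤ) : chiS m a n =
    if (2 * m : ℤ) ∣ n - (m - a - 1) then 1
    else if (2 * m : ℤ) ∣ n - (m + a + 1) then -1 else 0 := by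
  unfold chiS
  simp only [Int.emod_eq_emod_iff_emod_sub_eq_zero, ← Int.dvd_iff_emod_eq_zero]

lemma chi_add (m a : ℕ) (n k : ℤ) : chiS m a (n + 2 * m * k) = chiS m a n := by
  unfold chiS
  simp

lemma chi_excl (m a : ℕ) (ha : a + 2 ≤ m) (n : ℤ) (h1 : (2 * m : ℤ) ∣ n - (m - a - 1))
    (h2 : (2 * m : ℤ) ∣ n - (m + a + 1)) : False := by
  have h3 := dvd_sub h1 h2
  have h4 : (n - (m - a - 1) - (n - (m + a + 1)) : ℤ) = 2 * (a + 1) := by ring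
  rw [h4] at h3
  have := Int.le_of_dvd (by omega) h3
  omega

lemma chi_neg (m a : ℕ) (ha : a + 2 ≤ m) (n : ℤ) : chiS m a (-n) = -chiS m a n := by
  rw [chi_dvd, chi_dvd]
  have e1 : (2 * m : ℤ) ∣ -n - (m - a - 1) ↔ (2 * m : ℤ) ∣ n - (m + a + 1) := by
    constructor
    · rintro ⟨k, hk⟩; exact ⟨-k - 1, by linear_combination -hk⟩
    · rintro ⟨k, hk⟩; exact ⟨-k - 1, by linear_combination -hk⟩
  have e2 : (2 * m : ℤ) ∣ -n - (m + a + 1) ↔ (2 * m : ℤ) ∣ n - (m - a - 1) := by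
    constructor
    · rintro ⟨k, hk⟩; exact ⟨-k - 1, by linear_combination -hk⟩
    · rintro ⟨k, hk⟩; exact ⟨-k - 1, by linear_combination -hk⟩
  have h3 := chi_excl m a ha n
  rw [if_congr e1 rfl (if_congr e2 rfl rfl)]
  by_cases hA : (2 * m : ℤ) ∣ n - (m - a - 1)
  · have hB : ¬ (2 * m : ℤ) ∣ n - (m + a + 1) := fun hB => h3 hA hB
    simp [hA, hB]
  · by_cases hB : (2 * m : ℤ) ∣ n - (m + a + 1) <;> simp [hA, hB]

lemma exp_shift (H : ℕ) (hH : 0 < H) (M : ℤ) (x y : ℂ) (l : ℤ) (h : x ^ 2 = y ^ 2 + 4 * H * l) :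
    Complex.exp (2 * Real.pi * Complex.I * M * x ^ 2 / (4 * H)) =
      Complex.exp (2 * Real.pi * Complex.I * M * y ^ 2 / (4 * H)) := by
  have hHc : (H : ℂ) ≠ 0 := by exact_mod_cast hH.ne'
  have e : 2 * Real.pi * Complex.I * M * x ^ 2 / (4 * H) =
      2 * Real.pi * Complex.I * M * y ^ 2 / (4 * H) + ((M * l : ℤ) : ℂ) *
        (2 * Real.pi * Complex.I) := by
    rw [h]; push_cast; field_simp
  rw [e, Complex.exp_add, Complex.exp_int_mul_two_pi_mul_I, mul_one]

/-- The periodic coefficient. -/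
noncomputable def cf (m a : ℕ) (M : ℤ) (N : ℕ) (n : ℕ) : ℂ :=
  (chiS m a n : ℂ) * Complex.exp (2 * Real.pi * Complex.I * M * (n : ℂ) ^ 2 / (4 * (m * N : ℕ)))

lemma cf_per (m a : ℕ) (hm : 0 < m) (M : ℤ) (N : ℕ) (hN : 0 < N) (n : ℕ) :
    cf m a M N (n + 2 * (m * N)) = cf m a M N n := by
  unfold cf
  rw [show ((n + 2 * (m * N) : ℕ) : ℤ) = (n : ℤ) + 2 * m * N by push_cast; ring, chi_add,
    exp_shift (m * N) (Nat.mul_pos hm hN) M _ (n : ℂ) (n + m * N) (by push_cast; ring)]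

lemma cf_odd (m a : ℕ) (ha : a + 2 ≤ m) (M : ℤ) (N : ℕ) (hN : 0 < N) (n : ℕ)
    (hn : n ≤ 2 * (m * N)) :
    cf m a M N (2 * (m * N) - n) = -cf m a M N n := by
  unfold cf
  rw [Nat.cast_sub hn, Nat.cast_sub hn,
    show (((2 * (m * N) : ℕ) : ℤ) - (n : ℤ)) = -(n : ℤ) + 2 * m * N by push_cast; ring, chi_add,
    chi_neg m a ha,
    exp_shift (m * N) (Nat.mul_pos (by omega) hN) M _ (n : ℂ) (m * N - n) (by push_cast; ring)]
  push_cast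
  ring

/-! ### Reindexing -/

lemma hasSum_residue (G : ℕ → ℂ) (hG : Summable G) (K ρ : ℕ) (hρ : ρ < K) :
    HasSum (fun n => if n % K = ρ then G n else 0) (∑' r, G (K * r + ρ)) := by
  have hinj : Function.Injective (fun r : ℕ => K * r + ρ) := by
    intro x y hxy
    simp only [Nat.add_right_cancel_iff] at hxy
    exact Nat.eq_of_mul_eq_mul_left (by omega) hxy
  have hs : Summable (fun r => G (K * r + ρ)) := hG.comp_injective hinj
  rw [← hinj.hasSum_iff]
  · refine hs_congr hs.hasSum fun r => ?_
    simp only [Function.comp]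
    rw [if_pos]
    rw [Nat.mul_add_mod, Nat.mod_eq_of_lt hρ]
  · intro x hx
    rw [if_neg]
    intro h
    exact hx ⟨x / K, by simp only; rw [← h]; exact Nat.div_add_mod x K⟩

lemma chi_nat (a d n : ℕ) : (chiS (a + d + 2) a n : ℂ) =
    (if n % (2 * (a + d + 2)) = d + 1 then 1 else 0) -
    (if n % (2 * (a + d + 2)) = 2 * a + d + 3 then 1 else 0) := by
  unfold chiS
  have e1 : (((a + d + 2 : ℕ) : ℤ) - a - 1) % (2 * ((a + d + 2 : ℕ) : ℤ)) = ((d + 1 : ℕ) : ℤ) := by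
    rw [show (((a + d + 2 : ℕ) : ℤ) - a - 1) = ((d + 1 : ℕ) : ℤ) by push_cast; ring]
    apply Int.emod_eq_of_lt <;> omega
  have e2 : (((a + d + 2 : ℕ) : ℤ) + a + 1) % (2 * ((a + d + 2 : ℕ) : ℤ)) =
      ((2 * a + d + 3 : ℕ) : ℤ) := by
    rw [show (((a + d + 2 : ℕ) : ℤ) + a + 1) = ((2 * a + d + 3 : ℕ) : ℤ) by push_cast; ring]
    apply Int.emod_eq_of_lt <;> omega
  have e3 : (n : ℤ) % (2 * ((a + d + 2 : ℕ) : ℤ)) = ((n % (2 * (a + d + 2)) : ℕ) : ℤ) := by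
    push_cast; rfl
  rw [e1, e2, e3]
  simp only [Nat.cast_inj]
  split_ifs <;> first | omega | simp

lemma reindex (a d : ℕ) (z : ℂ) (hG : Summable (fun n : ℕ =>
      Complex.exp (z * ((n : ℂ) ^ 2 / (4 * (a + d + 2 : ℕ)))))) :
    Complex.exp (z * (((d : ℂ) + 1) ^ 2 / (4 * (a + d + 2 : ℕ)))) *
      ∑' r : ℕ, Complex.exp z ^ ((a + d + 2) * r ^ 2 + (d + 1) * r) *
      (1 - Complex.exp z ^ ((a + 1) * (2 * r + 1))) =
    ∑' n : ℕ, (chiS (a + d + 2) a n : ℂ) *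
      Complex.exp (z * ((n : ℂ) ^ 2 / (4 * (a + d + 2 : ℕ)))) := by
  have hmc : ((a + d + 2 : ℕ) : ℂ) ≠ 0 := by exact_mod_cast (by omega : a + d + 2 ≠ 0)
  set G : ℕ → ℂ := fun n => Complex.exp (z * ((n : ℂ) ^ 2 / (4 * (a + d + 2 : ℕ)))) with hGd
  have h1 := hasSum_residue G hG (2 * (a + d + 2)) (d + 1) (by omega)
  have h2 := hasSum_residue G hG (2 * (a + d + 2)) (2 * a + d + 3) (by omega)
  have h3 := h1.sub h2
  have inj : ∀ ρ, Function.Injective (fun r : ℕ => 2 * (a + d + 2) * r + ρ) := by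
    intro ρ x y hxy
    simp only [Nat.add_right_cancel_iff] at hxy
    exact Nat.eq_of_mul_eq_mul_left (by omega) hxy
  have s1 : Summable (fun r => G (2 * (a + d + 2) * r + (d + 1))) := hG.comp_injective (inj _)
  have s2 : Summable (fun r => G (2 * (a + d + 2) * r + (2 * a + d + 3))) :=
    hG.comp_injective (inj _)
  rw [← s1.tsum_sub s2] at h3
  have h4 : HasSum (fun n : ℕ => (chiS (a + d + 2) a n : ℂ) * G n)
      (∑' r, (G (2 * (a + d + 2) * r + (d + 1)) - G (2 * (a + d + 2) * r + (2 * a + d + 3)))) := by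
    refine hs_congr h3 fun n => ?_
    rw [chi_nat]
    split_ifs <;> simp
  rw [h4.tsum_eq, ← tsum_mul_left]
  congr 1
  funext r
  simp only [hGd]
  rw [mul_sub, mul_one, mul_sub, ← pow_add, ← Complex.exp_nat_mul, ← Complex.exp_nat_mul,
    ← Complex.exp_add, ← Complex.exp_add]
  congr 2
  · push_cast at hmc ⊢
    field_simp
    ring
  · push_cast at hmc ⊢
    field_simp
    ring

theorem stmt1 (m a : ℕ) (hm : 2 ≤ m) (ha : a ≤ m - 2) (M : ℤ) (N : ℕ) (hN : 0 < N)
    (hMN : IsCoprime M (N : ℤ)) :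
    Filter.Tendsto
      (fun t : ℝ => (m : ℂ) *
        Complex.exp ((2 * Real.pi * Complex.I * M / N - t) * (((m : ℂ) - a - 1) ^ 2 / (4 * m))) *
        S m a (Complex.exp (2 * Real.pi * Complex.I * M / N - t)))
      (nhdsWithin 0 (Set.Ioi 0))
      (nhds ((m : ℂ) * ∑ n ∈ Finset.range (m * N + 1),
        (chiS m a n : ℂ) * (1 - (n : ℂ) / (m * N)) *
          Complex.exp (2 * Real.pi * Complex.I * M * (n : ℂ) ^ 2 / (4 * m * N)))) := by
  obtain ⟨d, rfl⟩ : ∃ d, m = a + d + 2 := ⟨m - 2 - a, by omega⟩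
  set m := a + d + 2 with hmdef
  have hmc : (m : ℂ) ≠ 0 := by exact_mod_cast (by omega : m ≠ 0)
  have hNc : (N : ℂ) ≠ 0 := by exact_mod_cast hN.ne'
  have hm0 : (0 : ℝ) < m := by exact_mod_cast (by omega : 0 < m)
  have hH : 0 < m * N := Nat.mul_pos (by omega) hN
  obtain ⟨hs0, hs1⟩ := odd_sums (cf m a M N) (m * N) hH (cf_per m a (by omega) M N hN)
    (fun n hn => cf_odd m a (by omega) M N hN n hn)
  have hab := abel_limit (cf m a M N) (2 * (m * N)) (by omega)
    (cf_per m a (by omega) M N hN) hs0 _ hs1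
  have hscale : Filter.Tendsto (fun t : ℝ => t / (4 * m)) (nhdsWithin 0 (Set.Ioi 0))
      (nhdsWithin 0 (Set.Ioi 0)) := by
    rw [tendsto_nhdsWithin_iff]
    constructor
    · have hc : Continuous (fun t : ℝ => t / (4 * m)) := by fun_prop
      have := (hc.tendsto 0).mono_left (nhdsWithin_le_nhds (s := Set.Ioi 0))
      simpa using this
    · filter_upwards [self_mem_nhdsWithin] with t ht
      have : 0 < t := ht
      show 0 < t / (4 * m)
      positivity
  have hlim := (hab.comp hscale).const_mul (m : ℂ)
  have elim : (m : ℂ) * ∑ n ∈ Finset.range (m * N + 1), cf m a M N n *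
        (1 - (n : ℂ) / ((m * N : ℕ) : ℂ)) = (m : ℂ) * ∑ n ∈ Finset.range (m * N + 1),
        (chiS m a n : ℂ) * (1 - (n : ℂ) / (m * N)) *
          Complex.exp (2 * Real.pi * Complex.I * M * (n : ℂ) ^ 2 / (4 * m * N)) := by
    congr 1
    refine Finset.sum_congr rfl fun n _ => ?_
    unfold cf
    rw [Nat.cast_mul, ← mul_assoc (4 : ℂ)]
    ring
  rw [elim] at hlim
  refine hlim.congr' ?_
  filter_upwards [self_mem_nhdsWithin] with t ht
  have ht0 : 0 < t := ht
  set z : ℂ := 2 * Real.pi * Complex.I * M / N - t with hz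
  have hzre : z.re = -t := by
    have : z = ((2 * Real.pi * M / N : ℝ) : ℂ) * Complex.I + ((-t : ℝ) : ℂ) := by
      rw [hz]; push_cast; ring
    rw [this, Complex.add_re, Complex.re_ofReal_mul, Complex.I_re, Complex.ofReal_re]; simp
  have hq : ‖Complex.exp z‖ < 1 := by
    rw [Complex.norm_exp, hzre, Real.exp_lt_one_iff]; linarith
  have hterm' : ∀ n : ℕ, Complex.exp (z * ((n : ℂ) ^ 2 / (4 * (m : ℕ)))) =
      Complex.exp (2 * Real.pi * Complex.I * M * (n : ℂ) ^ 2 / (4 * (m * N : ℕ))) *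
        (Real.exp (-(t / (4 * m) * (n : ℝ) ^ 2)) : ℂ) := by
    intro n
    rw [Complex.ofReal_exp, ← Complex.exp_add]
    congr 1
    rw [hz]
    push_cast
    field_simp
    ring
  have hG : Summable (fun n : ℕ => Complex.exp (z * ((n : ℂ) ^ 2 / (4 * (m : ℕ))))) := by
    refine Summable.of_norm_bounded (gauss_summable (t / (4 * m)) (by positivity)) fun n => ?_
    rw [Complex.norm_exp]
    apply le_of_eq
    congr 1
    have : z * ((n : ℂ) ^ 2 / (4 * (m : ℕ))) = z * (((n : ℝ) ^ 2 / (4 * m) : ℝ) : ℂ) := by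
      push_cast; ring
    rw [this, Complex.re_mul_ofReal, hzre]
    ring
  have hre := reindex a d z hG
  rw [← S_eq _ hq a d] at hre
  have hd : ((m : ℂ) - a - 1) = d + 1 := by rw [hmdef]; push_cast; ring
  rw [hd, mul_assoc, hre]
  simp only [Function.comp]
  congr 2
  funext n
  have := hterm' n
  rw [this]
  unfold cf
  ring
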